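/- arXiv:1908.10491 — 2 statements merged into one kernel-verified Lean document; each statement's English description precedes it below -/
import Mathlib

section
/- Let n ≥ 4, let t ≥ 1, let l₁, …, l_t ≥ 1, and set n' = Σᵢ (lᵢ − 1); assume n − n' ≥ 4. Then the chordless cycle C_n has an IP-SEG model with exactly t interval arcs whose lengths are l₁, …, l_t if and only if the chordless cycle C_{n−n'} has an IP-SEG model with exactly t interval arcs, each of length 1. -/
/-- A segment between the horizontal lines `L₁ = {y = 1}` and `L₂ = {y = 2}`,
given by its two endpoints, each of which lies on `L₁` or `L₂`. -/
structure IPSeg where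
  p : ℝ × ℝ
  q : ℝ × ℝ
  hp : p.2 = 1 ∨ p.2 = 2
  hq : q.2 = 1 ∨ q.2 = 2

namespace IPSeg

/-- The closed line segment in `ℝ²` determined by the two endpoints. -/
def carrier (s : IPSeg) : Set (ℝ × ℝ) := segment ℝ s.p s.q

/-- An interval segment: both endpoints on the same horizontal line. -/
def IsInterval (s : IPSeg) : Prop := s.p.2 = s.q.2

/-- A permutation segment: one endpoint on each horizontal line. -/
def IsPermutation (s : IPSeg) : Prop := s.p.2 ≠ s.q.2

/-- The (set of) endpoints of the segment. -/
def endpoints (s : IPSeg) : Set (ℝ × ℝ) := {s.p, s.q}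

end IPSeg

/-- An IP-SEG model of a graph: distinct vertices are adjacent iff their segments meet. -/
def IsIPSEGModel {V : Type*} (G : SimpleGraph V) (s : V → IPSeg) : Prop :=
  ∀ u v : V, u ≠ v → (G.Adj u v ↔ ((s u).carrier ∩ (s v).carrier).Nonempty)

/-- An IP-SEG* model: an IP-SEG model in which all interval segments lie on one line. -/
def IsIPSEGStarModel {V : Type*} (G : SimpleGraph V) (s : V → IPSeg) : Prop :=
  IsIPSEGModel G s ∧
    ∃ c : ℝ, (c = 1 ∨ c = 2) ∧ ∀ v : V, (s v).IsInterval → (s v).p.2 = c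

/-- The chordless cycle `C_n` on vertex set `ZMod n`, with edges exactly
`v — v + 1` (indices modulo `n`). -/
def CycleGraph (n : ℕ) : SimpleGraph (ZMod n) :=
  SimpleGraph.fromRel (fun u v => v = u + 1)

/-- `v` is the start of an interval arc: `v` is assigned an interval segment but its
cyclic predecessor is not. -/
def IntArcStart (n : ℕ) (s : ZMod n → IPSeg) (v : ZMod n) : Prop :=
  (s v).IsInterval ∧ ¬ (s (v - 1)).IsInterval

/-- The interval arc starting at `v` has length `l`: the `l` consecutive vertices
`v, v+1, …, v+l-1` carry interval segments and `v + l` does not. -/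
def IntArcLen (n : ℕ) (s : ZMod n → IPSeg) (v : ZMod n) (l : ℕ) : Prop :=
  (∀ k : ℕ, k < l → (s (v + (k : ZMod n))).IsInterval) ∧
    ¬ (s (v + (l : ZMod n))).IsInterval

/-- `v` is the start of a permutation arc. -/
def PermArcStart (n : ℕ) (s : ZMod n → IPSeg) (v : ZMod n) : Prop :=
  (s v).IsPermutation ∧ ¬ (s (v - 1)).IsPermutation

/-- The permutation arc starting at `v` has length `l`. -/
def PermArcLen (n : ℕ) (s : ZMod n → IPSeg) (v : ZMod n) (l : ℕ) : Prop :=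
  (∀ k : ℕ, k < l → (s (v + (k : ZMod n))).IsPermutation) ∧
    ¬ (s (v + (l : ZMod n))).IsPermutation

/-- The model `s` has exactly `t` interval arcs, of lengths `l 0, …, l (t-1)`. -/
def HasIntervalArcs (n t : ℕ) (s : ZMod n → IPSeg) (l : Fin t → ℕ) : Prop :=
  ∃ e : Fin t → ZMod n, Function.Injective e ∧
    (∀ i : Fin t, IntArcStart n s (e i) ∧ IntArcLen n s (e i) (l i)) ∧
    (∀ v : ZMod n, IntArcStart n s v → ∃ i : Fin t, e i = v)

namespace IPSeg

/-- Two segments meet if their carriers intersect. -/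
def Meets (a b : IPSeg) : Prop := (a.carrier ∩ b.carrier).Nonempty

theorem Meets.symm {a b : IPSeg} (h : a.Meets b) : b.Meets a := by
  rwa [Meets, Set.inter_comm]

theorem carrier_eq_of_isInterval {s : IPSeg} (h : s.IsInterval) :
    s.carrier = Set.uIcc s.p.1 s.q.1 ×ˢ {s.p.2} := by
  obtain ⟨⟨a, y⟩, ⟨b, z⟩, hp, hq⟩ := s
  obtain rfl : y = z := h
  simp only [carrier]
  rw [← Prod.image_mk_segment_left, segment_eq_uIcc, Set.prod_singleton]

/-- The interval segment from `(a, y)` to `(b, y)`. -/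
def interval (a b y : ℝ) (hy : y = 1 ∨ y = 2) : IPSeg := ⟨(a, y), (b, y), hy, hy⟩

theorem isInterval_interval (a b y : ℝ) (hy : y = 1 ∨ y = 2) :
    (interval a b y hy).IsInterval := rfl

theorem carrier_interval {a b y : ℝ} (hy : y = 1 ∨ y = 2) (hab : a ≤ b) :
    (interval a b y hy).carrier = Set.Icc a b ×ˢ {y} := by
  rw [carrier_eq_of_isInterval (isInterval_interval a b y hy)]
  simp [interval, Set.uIcc_of_le hab]

theorem IsInterval.exists_carrier_eq {s : IPSeg} (h : s.IsInterval) :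
    ∃ a b y : ℝ, a ≤ b ∧ (y = 1 ∨ y = 2) ∧ s.carrier = Set.Icc a b ×ˢ {y} :=
  ⟨_, _, _, min_le_max, s.hp, carrier_eq_of_isInterval h⟩

/-- The union of two meeting interval segments is an interval segment. -/
theorem exists_interval_union {s r : IPSeg} (hs : s.IsInterval) (hr : r.IsInterval)
    (h : s.Meets r) :
    ∃ u : IPSeg, u.IsInterval ∧ u.carrier = s.carrier ∪ r.carrier := by
  obtain ⟨a, b, y, hab, hy, hsc⟩ := hs.exists_carrier_eq
  obtain ⟨c, d, z, hcd, -, hrc⟩ := hr.exists_carrier_eq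
  obtain ⟨⟨x, w⟩, hx, hx'⟩ := h
  rw [hsc] at hx
  rw [hrc] at hx'
  simp only [Set.mem_prod, Set.mem_Icc, Set.mem_singleton_iff] at hx hx'
  obtain ⟨hx, rfl⟩ := hx
  obtain ⟨hx', rfl⟩ := hx'
  refine ⟨interval (min a c) (max b d) w hy, isInterval_interval _ _ _ _, ?_⟩
  rw [carrier_interval hy (by simp [hab]), hsc, hrc, ← Set.union_prod,
    Set.Icc_union_Icc' (hx'.1.trans hx.2) (hx.1.trans hx'.2)]

/-- An interval segment meeting two disjoint segments splits into two touching interval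
segments, each of which avoids one of the given segments. -/
theorem exists_interval_split {s a b : IPSeg} (hs : s.IsInterval)
    (ha : s.Meets a) (hb : s.Meets b) (hab : ¬ a.Meets b) :
    ∃ u v : IPSeg, u.IsInterval ∧ v.IsInterval ∧ u.Meets v ∧
      s.carrier = u.carrier ∪ v.carrier ∧ ¬ u.Meets a ∧ ¬ v.Meets b := by
  obtain ⟨c, d, y, -, hy, hsc⟩ := hs.exists_carrier_eq
  have hcompact (r : IPSeg) : IsCompact r.carrier := by
    rw [carrier, segment_eq_image_lineMap]
    exact isCompact_Icc.image AffineMap.lineMap_continuous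
  obtain ⟨f, w, w', hfa, hw, hfb⟩ := geometric_hahn_banach_compact_closed
    (convex_segment a.p a.q) (hcompact a) (convex_segment b.p b.q) (hcompact b).isClosed
    (Set.disjoint_iff_inter_eq_empty.2 (Set.not_nonempty_iff_eq_empty.1 hab))
  change ∀ x ∈ a.carrier, _ at hfa
  change ∀ x ∈ b.carrier, _ at hfb
  have hf (x : ℝ) : f (x, y) = x * f (1, 0) + f (0, y) := by
    rw [← smul_eq_mul, ← map_smul, ← map_add]
    simp
  set k := f (1, 0)
  obtain ⟨⟨α, y'⟩, hαs, hα⟩ := ha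
  obtain ⟨⟨β, y''⟩, hβs, hβ⟩ := hb
  rw [hsc] at hαs hβs
  simp only [Set.mem_prod, Set.mem_Icc, Set.mem_singleton_iff] at hαs hβs
  obtain ⟨hαs, rfl⟩ := hαs
  obtain ⟨hβs, rfl⟩ := hβs
  have h1 := hfa _ hα
  have h2 := hfb _ hβ
  rw [hf] at h1 h2
  have hk : k ≠ 0 := by
    intro hk
    rw [hk] at h1 h2
    linarith
  obtain ⟨m, hm⟩ : ∃ m : ℝ, m * k + f (0, y'') = w :=
    ⟨(w - f (0, y'')) / k, by field_simp; ring⟩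
  have hA (x : ℝ) (hx : (x, y'') ∈ a.carrier) : x * k < m * k := by
    have := hfa _ hx
    rw [hf] at this
    linarith
  have hB (x : ℝ) (hx : (x, y'') ∈ b.carrier) : m * k < x * k := by
    have := hfb _ hx
    rw [hf] at this
    linarith
  have hαm := hA _ hα
  have hβm := hB _ hβ
  rcases lt_or_gt_of_ne hk with hk | hk
  · rw [mul_lt_mul_right_of_neg hk] at hαm hβm
    have hcl := carrier_interval hy (show c ≤ m by linarith)
    have hcr := carrier_interval hy (show m ≤ d by linarith)
    refine ⟨interval c m y'' hy, interval m d y'' hy, isInterval_interval _ _ _ _,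
      isInterval_interval _ _ _ _, ?_, ?_, ?_, ?_⟩
    all_goals simp only [Meets, hcl, hcr]
    · exact ⟨(m, y''), by simp; linarith, by simp; linarith⟩
    · rw [hsc, ← Set.union_prod, Set.Icc_union_Icc_eq_Icc (by linarith) (by linarith)]
    · rintro ⟨⟨x, z⟩, ⟨hx, rfl⟩, hxa⟩
      have := hA _ hxa
      rw [mul_lt_mul_right_of_neg hk] at this
      exact absurd hx.2 (not_le.2 this)
    · rintro ⟨⟨x, z⟩, ⟨hx, rfl⟩, hxb⟩
      have := hB _ hxb
      rw [mul_lt_mul_right_of_neg hk] at this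
      exact absurd hx.1 (not_le.2 this)
  · rw [mul_lt_mul_iff_left₀ hk] at hαm hβm
    have hcl := carrier_interval hy (show c ≤ m by linarith)
    have hcr := carrier_interval hy (show m ≤ d by linarith)
    refine ⟨interval m d y'' hy, interval c m y'' hy, isInterval_interval _ _ _ _,
      isInterval_interval _ _ _ _, ?_, ?_, ?_, ?_⟩
    all_goals simp only [Meets, hcl, hcr]
    · exact ⟨(m, y''), by simp; linarith, by simp; linarith⟩
    · rw [hsc, Set.union_comm, ← Set.union_prod,
        Set.Icc_union_Icc_eq_Icc (by linarith) (by linarith)]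
    · rintro ⟨⟨x, z⟩, ⟨hx, rfl⟩, hxa⟩
      have := hA _ hxa
      rw [mul_lt_mul_iff_left₀ hk] at this
      exact absurd hx.1 (not_le.2 this)
    · rintro ⟨⟨x, z⟩, ⟨hx, rfl⟩, hxb⟩
      have := hB _ hxb
      rw [mul_lt_mul_iff_left₀ hk] at this
      exact absurd hx.2 (not_le.2 this)

theorem meets_iff_of_carrier_eq_union {s u v r : IPSeg}
    (h : s.carrier = u.carrier ∪ v.carrier) : s.Meets r ↔ u.Meets r ∨ v.Meets r := by
  rw [Meets, h, Set.union_inter_distrib_right, Set.union_nonempty]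
  rfl

end IPSeg

open IPSeg

/-- The segments `S 0, …, S (n - 1)` form a model of the cycle traversed in this order. -/
def IsLinearCycleModel (n : ℕ) (S : ℕ → IPSeg) : Prop :=
  ∀ i j : ℕ, i < j → j < n → ((S i).Meets (S j) ↔ j = i + 1 ∨ (i = 0 ∧ j + 1 = n))

/-- In the cyclic pattern `b 0, …, b (n - 1)`, which is cut open at the beginning of the `j`-th
arc, the maximal blocks where `b` holds have lengths `l 0, …, l (t - 1)`. -/
def HasLinearArcs (n t : ℕ) (b : ℕ → Prop) (l : Fin t → ℕ) (j : Fin t) : Prop :=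
  ¬ b (n - 1) ∧ ∃ a : Fin t → ℕ, Function.Injective a ∧ a j = 0 ∧
    (∀ i, a i + l i < n ∧ (∀ k < l i, b (a i + k)) ∧ ¬ b (a i + l i) ∧
      b (a i) ∧ (a i = 0 ∨ ¬ b (a i - 1))) ∧
    ∀ v < n, b v → (v = 0 ∨ ¬ b (v - 1)) → ∃ i, a i = v

theorem cycleGraph_adj_add_natCast_iff {n : ℕ} (u : ZMod n) {i j : ℕ} (hij : i < j)
    (hj : j < n) :
    (CycleGraph n).Adj (u + i) (u + j) ↔ j = i + 1 ∨ (i = 0 ∧ j + 1 = n) := by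
  have hne : u + (i : ZMod n) ≠ u + j := by
    rw [Ne, add_right_inj, ZMod.natCast_eq_natCast_iff', Nat.mod_eq_of_lt hj,
      Nat.mod_eq_of_lt (hij.trans hj)]
    exact hij.ne
  have h1 : u + (j : ZMod n) = u + i + 1 ↔ j = i + 1 := by
    rw [add_assoc, add_right_inj, ← Nat.cast_succ, ZMod.natCast_eq_natCast_iff',
      Nat.mod_eq_of_lt hj, Nat.mod_eq_of_lt (by omega)]
  have h2 : u + (i : ZMod n) = u + j + 1 ↔ i = 0 ∧ j + 1 = n := by
    rw [add_assoc, add_right_inj, ← Nat.cast_succ, ZMod.natCast_eq_natCast_iff',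
      Nat.mod_eq_of_lt (hij.trans hj)]
    rcases Nat.lt_or_ge (j + 1) n with h | h
    · rw [Nat.mod_eq_of_lt h]
      omega
    · obtain rfl : n = j + 1 := by omega
      simp
  simp only [CycleGraph, SimpleGraph.fromRel_adj, h1, h2, hne, ne_eq, not_false_eq_true,
    true_and]

/-- A model of the cycle with prescribed interval arcs can be cut open at the beginning of any
of its arcs. -/
theorem exists_linear_model_iff {n t : ℕ} (hn : 1 ≤ n) (l : Fin t → ℕ) (j : Fin t) :
    (∃ s : ZMod n → IPSeg, IsIPSEGModel (CycleGraph n) s ∧ HasIntervalArcs n t s l) ↔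
    ∃ S : ℕ → IPSeg, IsLinearCycleModel n S ∧
      HasLinearArcs n t (fun k => (S k).IsInterval) l j := by
  have : NeZero n := ⟨by omega⟩
  have hcast : ((n - 1 : ℕ) : ZMod n) = -1 := by
    rw [Nat.cast_sub hn]
    simp
  constructor
  · rintro ⟨s, hs, e, he, hlen, hall⟩
    have hval (v : ZMod n) : e j + ((v - e j).val : ZMod n) = v := by simp
    refine ⟨fun k => s (e j + k), ?_, ?_, fun i => (e i - e j).val, ?_, ?_, ?_, ?_⟩
    · intro i k hik hk
      rw [← cycleGraph_adj_add_natCast_iff (e j) hik hk, hs]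
      · rfl
      · rw [Ne, add_right_inj, ZMod.natCast_eq_natCast_iff', Nat.mod_eq_of_lt hk,
          Nat.mod_eq_of_lt (hik.trans hk)]
        exact hik.ne
    · simp only [hcast, ← sub_eq_add_neg]
      exact (hlen j).1.2
    · intro i k hik
      exact he (sub_left_injective (ZMod.val_injective n hik))
    · simp
    · intro i
      have hpos : (e i - e j).val < n := ZMod.val_lt _
      obtain ⟨⟨hi, hi'⟩, hlt, hend⟩ := hlen i
      simp only [Nat.cast_add, ← add_assoc, hval]
      refine ⟨?_, hlt, hend, hi, ?_⟩
      · by_contra! hge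
        refine (hlen j).1.2 ?_
        have := hlt (n - 1 - (e i - e j).val) (by omega)
        rw [Nat.cast_sub (by omega), hcast, ZMod.natCast_zmod_val] at this
        convert this using 2
        ring
      · rcases Nat.eq_zero_or_pos (e i - e j).val with h0 | h0
        · exact Or.inl h0
        · right
          rw [Nat.cast_sub h0, Nat.cast_one, ← add_sub_assoc, hval]
          exact hi'
    · intro v hv hbv hpre
      have hstart : IntArcStart n s (e j + v) := by
        refine ⟨hbv, ?_⟩
        rcases Nat.eq_zero_or_pos v with rfl | h0
        · simpa using (hlen j).1.2
        · have := hpre.resolve_left h0.ne'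
          simp only at this
          rwa [Nat.cast_sub h0, Nat.cast_one, ← add_sub_assoc] at this
      obtain ⟨i, hi⟩ := hall _ hstart
      exact ⟨i, by simp [hi, ZMod.val_natCast, Nat.mod_eq_of_lt hv]⟩
  · rintro ⟨S, hS, hlast, a, ha, haj, hlen, hall⟩
    have hval {k : ℕ} (hk : k < n) : (k : ZMod n).val = k := by
      rw [ZMod.val_natCast, Nat.mod_eq_of_lt hk]
    have hpred {k : ℕ} (hk : k < n) :
        ¬ (S ((k : ZMod n) - 1).val).IsInterval ↔ (k = 0 ∨ ¬ (S (k - 1)).IsInterval) := by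
      rcases Nat.eq_zero_or_pos k with rfl | h0
      · rw [Nat.cast_zero, zero_sub, ← hcast, hval (by omega)]
        simpa using hlast
      · rw [← Nat.cast_one, ← Nat.cast_sub h0, hval (by omega)]
        simp [h0.ne']
    refine ⟨fun x => S x.val, ?_, fun i => (a i : ZMod n), ?_, ?_, ?_⟩
    · have hlt {u v : ZMod n} (huv : u.val < v.val) :
          (CycleGraph n).Adj u v ↔ (S u.val).Meets (S v.val) := by
        rw [hS _ _ huv (ZMod.val_lt v),
          ← cycleGraph_adj_add_natCast_iff 0 huv (ZMod.val_lt v)]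
        simp
      intro u v huv
      rcases lt_or_gt_of_ne ((ZMod.val_injective n).ne huv) with h | h
      · exact hlt h
      · rw [SimpleGraph.adj_comm, hlt h]
        exact ⟨Meets.symm, Meets.symm⟩
    · intro i k hik
      have h1 := (hlen i).1
      have h2 := (hlen k).1
      have := congrArg ZMod.val hik
      simp only at this
      rw [hval (by omega), hval (by omega)] at this
      exact ha this
    · intro i
      obtain ⟨h1, h2, h3, h4, h5⟩ := hlen i
      refine ⟨⟨?_, (hpred (by omega)).2 h5⟩, ?_, ?_⟩
      · simpa only [hval (show a i < n by omega)] using h4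
      · intro k hk
        have := h2 k hk
        simp only [← Nat.cast_add]
        rwa [hval (by omega)]
      · simp only [← Nat.cast_add]
        rwa [hval h1]
    · rintro v ⟨hv, hv'⟩
      obtain ⟨i, hi⟩ := hall v.val (ZMod.val_lt v) hv
        ((hpred (ZMod.val_lt v)).1 (by simpa using hv'))
      exact ⟨i, by simp [hi]⟩

/-- Prepending one more entry to the first block lengthens that block by one. -/
theorem hasLinearArcs_succ_iff {n t : ℕ} (hn : 1 ≤ n) {b b' : ℕ → Prop}
    (h0 : b 0) (h0' : b' 0) (hb : ∀ k, b' (k + 1) ↔ b k) (l : Fin t → ℕ)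
    (j : Fin t) :
    HasLinearArcs (n + 1) t b' (Function.update l j (l j + 1)) j ↔
      HasLinearArcs n t b l j := by
  have hb' {k : ℕ} (hk : 1 ≤ k) : b' k ↔ b (k - 1) := by
    obtain ⟨k, rfl⟩ := Nat.exists_eq_add_of_le' hk
    exact hb k
  constructor
  · rintro ⟨hlast, a, ha, haj, hlen, hall⟩
    have hpos {i : Fin t} (hi : i ≠ j) : 2 ≤ a i := by
      have h : a i ≠ 0 := fun h => hi (ha (h.trans haj.symm))
      by_contra! hlt
      have h1 : a i = 1 := by omega
      have := (hlen i).2.2.2.2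
      simp [h1, h0'] at this
    refine ⟨by rwa [← hb' hn], fun i => a i - 1, ?_, by simp [haj], ?_, ?_⟩
    · intro i k hik
      simp only at hik
      by_cases hi : i = j <;> by_cases hk : k = j
      · rw [hi, hk]
      · have := hpos hk
        rw [hi, haj] at hik
        omega
      · have := hpos hi
        rw [hk, haj] at hik
        omega
      · have h1 := hpos hi
        have h2 := hpos hk
        exact ha (by omega)
    · intro i
      obtain ⟨h1, h2, h3, h4, h5⟩ := hlen i
      by_cases hi : i = j
      · subst hi
        simp only [haj, Function.update_self, zero_add] at h1 h2 h3 ⊢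
        refine ⟨by omega, fun k hk => ?_, by simpa [hb] using h3, by simpa using h0, by simp⟩
        have := h2 (k + 1) (by omega)
        rw [hb] at this
        simpa using this
      · have h := hpos hi
        rw [Function.update_of_ne hi] at h1 h2 h3
        dsimp only
        refine ⟨by omega, fun k hk => ?_, ?_, ?_, ?_⟩
        · have := h2 k hk
          rw [hb' (by omega)] at this
          convert this using 1
          omega
        · rw [hb' (by omega)] at h3
          convert h3 using 2
          omega
        · rwa [← hb' (by omega)]
        · right
          rw [← hb' (by omega)]
          exact h5.resolve_left (by omega)
    · intro v hv hbv hpre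
      rcases Nat.eq_zero_or_pos v with rfl | hvpos
      · exact ⟨j, by simp [haj]⟩
      · obtain ⟨i, hi⟩ := hall (v + 1) (by omega) ((hb v).2 hbv) (Or.inr (by
          rw [Nat.add_sub_cancel, hb' hvpos]
          exact hpre.resolve_left hvpos.ne'))
        exact ⟨i, by simp [hi]⟩
  · rintro ⟨hlast, a, ha, haj, hlen, hall⟩
    have hpos {i : Fin t} (hi : i ≠ j) : 1 ≤ a i :=
      Nat.one_le_iff_ne_zero.2 fun h => hi (ha (h.trans haj.symm))
    refine ⟨by rwa [Nat.add_sub_cancel, hb' hn],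
      fun i => if i = j then 0 else a i + 1, ?_, by simp, ?_, ?_⟩
    · intro i k hik
      simp only at hik
      split_ifs at hik with hi hk hk
      · rw [hi, hk]
      · exact ha (by omega)
    · intro i
      obtain ⟨h1, h2, h3, h4, h5⟩ := hlen i
      by_cases hi : i = j
      · subst hi
        simp only [haj, Function.update_self, zero_add, if_true] at h1 h2 h3 ⊢
        refine ⟨by omega, fun k hk => ?_, by rwa [hb], h0', by simp⟩
        rcases Nat.eq_zero_or_pos k with rfl | hk0
        · exact h0'
        · rw [hb' hk0]
          exact h2 _ (by omega)
      · have h := hpos hi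
        simp only [if_neg hi, Function.update_of_ne hi]
        refine ⟨by omega, fun k hk => ?_, ?_, (hb _).2 h4, Or.inr ?_⟩
        · rw [add_right_comm, hb]
          exact h2 k hk
        · rwa [add_right_comm, hb]
        · rw [Nat.add_sub_cancel, hb' h]
          exact h5.resolve_left (by omega)
    · intro v hv hbv hpre
      rcases Nat.eq_zero_or_pos v with rfl | hvpos
      · exact ⟨j, by simp⟩
      · have hpre := hpre.resolve_left hvpos.ne'
        have hv1 : v ≠ 1 := by
          rintro rfl
          exact hpre h0'
        rw [hb' hvpos] at hbv
        rw [hb' (by omega)] at hpre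
        obtain ⟨i, hi⟩ := hall (v - 1) (by omega) hbv (Or.inr hpre)
        have hij : i ≠ j := by
          rintro rfl
          omega
        exact ⟨i, by simp only [if_neg hij]; omega⟩

theorem HasLinearArcs.zero {n t : ℕ} {b : ℕ → Prop} {l : Fin t → ℕ} {j : Fin t}
    (h : HasLinearArcs n t b l j) : b 0 := by
  obtain ⟨-, a, -, haj, hlen, -⟩ := h
  simpa [haj] using (hlen j).2.2.2.1

theorem HasLinearArcs.apply_of_lt {n t : ℕ} {b : ℕ → Prop} {l : Fin t → ℕ} {j : Fin t}
    (h : HasLinearArcs n t b l j) {k : ℕ} (hk : k < l j) : b k := by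
  obtain ⟨-, a, -, haj, hlen, -⟩ := h
  simpa [haj] using (hlen j).2.1 k hk

/-- Contracting or subdividing an edge inside an interval arc. -/
theorem exists_linear_model_succ_iff {n t : ℕ} (hn : 4 ≤ n) (l : Fin t → ℕ) (j : Fin t)
    (hlj : 1 ≤ l j) :
    (∃ S : ℕ → IPSeg, IsLinearCycleModel (n + 1) S ∧ HasLinearArcs (n + 1) t
      (fun k => (S k).IsInterval) (Function.update l j (l j + 1)) j) ↔
    ∃ S : ℕ → IPSeg, IsLinearCycleModel n S ∧
      HasLinearArcs n t (fun k => (S k).IsInterval) l j := by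
  constructor
  · rintro ⟨S, hS, harcs⟩
    have h0 : (S 0).IsInterval := harcs.apply_of_lt (k := 0) (by simp)
    have h1 : (S 1).IsInterval := harcs.apply_of_lt (k := 1) (by rw [Function.update_self]; omega)
    obtain ⟨u, hu, hcar⟩ := exists_interval_union h0 h1
      ((hS 0 1 (by omega) (by omega)).2 (Or.inl rfl))
    refine ⟨fun k => if k = 0 then u else S (k + 1), ?_, ?_⟩
    · intro i k hik hk
      have hk0 : k ≠ 0 := by omega
      simp only [if_neg hk0]
      split_ifs with hi
      · subst hi
        rw [meets_iff_of_carrier_eq_union hcar, hS 0 (k + 1) (by omega) (by omega),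
          hS 1 (k + 1) (by omega) (by omega)]
        omega
      · rw [hS (i + 1) (k + 1) (by omega) (by omega)]
        omega
    · refine (hasLinearArcs_succ_iff (by omega) (by simpa using hu) h0 ?_ l j).1 harcs
      intro k
      by_cases hk : k = 0
      · simp [hk, h1, hu]
      · simp [hk]
  · rintro ⟨S, hS, harcs⟩
    have h0 : (S 0).IsInterval := harcs.zero
    have hmeet1 : (S 0).Meets (S 1) := (hS 0 1 (by omega) (by omega)).2 (Or.inl rfl)
    have hmeet2 : (S 0).Meets (S (n - 1)) :=
      (hS 0 (n - 1) (by omega) (by omega)).2 (Or.inr ⟨rfl, by omega⟩)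
    obtain ⟨u, v, hu, hv, huv, hcar, hu1, hv2⟩ := exists_interval_split h0 hmeet1 hmeet2
      (by rw [hS 1 (n - 1) (by omega) (by omega)]; omega)
    rw [meets_iff_of_carrier_eq_union hcar] at hmeet1 hmeet2
    have hmeet1 := hmeet1.resolve_left hu1
    have hmeet2 := hmeet2.resolve_right hv2
    have hfar {k : ℕ} (hk : 1 < k) (hk' : k + 1 < n) : ¬ u.Meets (S k) ∧ ¬ v.Meets (S k) := by
      rw [← not_or, ← meets_iff_of_carrier_eq_union hcar, hS 0 k (by omega) (by omega)]
      omega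
    refine ⟨fun k => if k = 0 then u else if k = 1 then v else S (k - 1), ?_, ?_⟩
    · intro i k hik hk
      have hk0 : k ≠ 0 := by omega
      simp only [if_neg hk0]
      rcases Nat.lt_or_ge k 2 with hk2 | hk2
      · obtain rfl : k = 1 := by omega
        obtain rfl : i = 0 := by omega
        simpa using huv
      · have hk1 : k ≠ 1 := by omega
        simp only [if_neg hk1]
        have hcases : k - 1 = 1 ∨ k - 1 = n - 1 ∨ (1 < k - 1 ∧ k - 1 + 1 < n) := by omega
        split_ifs with hi hi'
        · rcases hcases with h | h | h
          · rw [h]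
            exact iff_of_false hu1 (by omega)
          · rw [h]
            exact iff_of_true hmeet2 (by omega)
          · exact iff_of_false (hfar h.1 h.2).1 (by omega)
        · rcases hcases with h | h | h
          · rw [h]
            exact iff_of_true hmeet1 (by omega)
          · rw [h]
            exact iff_of_false hv2 (by omega)
          · exact iff_of_false (hfar h.1 h.2).2 (by omega)
        · rw [hS (i - 1) (k - 1) (by omega) (by omega)]
          omega
    · refine (hasLinearArcs_succ_iff (by omega) h0 (by simpa using hu) ?_ l j).2 harcs
      intro k
      by_cases hk : k = 0
      · simp [hk, hv, h0]
      · simp [hk]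

/-- Lengthening one interval arc by one vertex. -/
theorem exists_model_update_iff {n t : ℕ} (hn : 4 ≤ n) (l : Fin t → ℕ) (j : Fin t)
    (hlj : 1 ≤ l j) :
    (∃ s : ZMod (n + 1) → IPSeg, IsIPSEGModel (CycleGraph (n + 1)) s ∧
      HasIntervalArcs (n + 1) t s (Function.update l j (l j + 1))) ↔
    ∃ s : ZMod n → IPSeg, IsIPSEGModel (CycleGraph n) s ∧ HasIntervalArcs n t s l := by
  rw [exists_linear_model_iff (by omega) _ j, exists_linear_model_iff (by omega) _ j]
  exact exists_linear_model_succ_iff hn l j hlj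

/-- The chordless cycle `C_n` has an IP-SEG model with exactly `t` interval arcs of
lengths `l₁, …, l_t` iff the chordless cycle `C_{n - n'}`, where
`n' = ∑ᵢ (lᵢ - 1)`, has an IP-SEG model with exactly `t` interval arcs, each of
length `1`. -/
theorem cycle_model_arc_lengths (n t : ℕ) (hn : 4 ≤ n) (ht : 1 ≤ t)
    (l : Fin t → ℕ) (hl : ∀ i : Fin t, 1 ≤ l i)
    (hn' : 4 ≤ n - ∑ i : Fin t, (l i - 1)) :
    (∃ s : ZMod n → IPSeg, IsIPSEGModel (CycleGraph n) s ∧ HasIntervalArcs n t s l) ↔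
    (∃ s : ZMod (n - ∑ i : Fin t, (l i - 1)) → IPSeg,
      IsIPSEGModel (CycleGraph (n - ∑ i : Fin t, (l i - 1))) s ∧
      HasIntervalArcs (n - ∑ i : Fin t, (l i - 1)) t s (fun _ => 1)) := by
  clear hn ht
  induction hN : ∑ i : Fin t, (l i - 1) generalizing n l with
  | zero =>
    obtain rfl : l = fun _ => 1 := by
      funext i
      have h := Finset.sum_eq_zero_iff.1 hN i (Finset.mem_univ i)
      have := hl i
      omega
    rfl
  | succ N ih =>
    rw [hN] at hn'
    obtain ⟨j, -, hj⟩ := Finset.exists_ne_zero_of_sum_ne_zero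
      (show ∑ i : Fin t, (l i - 1) ≠ 0 by omega)
    set l' := Function.update l j (l j - 1) with hl'def
    have hl' (i : Fin t) : 1 ≤ l' i := by
      by_cases hi : i = j
      · subst hi
        simp only [hl'def, Function.update_self]
        omega
      · simpa [hl'def, hi] using hl i
    have hlupd : l = Function.update l' j (l' j + 1) := by
      have : l j - 1 + 1 = l j := by omega
      simp [hl'def, this]
    have hsum : ∑ i : Fin t, (l' i - 1) = N := by
      rw [← Finset.add_sum_erase _ _ (Finset.mem_univ j)] at hN ⊢
      have : ∑ i ∈ Finset.univ.erase j, (l' i - 1) = ∑ i ∈ Finset.univ.erase j, (l i - 1) :=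
        Finset.sum_congr rfl fun i hi => by simp [hl'def, Finset.ne_of_mem_erase hi]
      rw [this]
      simp only [hl'def, Function.update_self]
      omega
    obtain ⟨m, rfl⟩ : ∃ m, n = m + 1 := ⟨n - 1, by omega⟩
    rw [Nat.add_sub_add_right] at hn' ⊢
    rw [hlupd, exists_model_update_iff (by omega) l' j (hl' j)]
    exact ih m l' hl' (by rwa [hsum]) hsum
end

section
/- For every n ≥ 9, the graph Gₙ is not an IP-SEG graph. -/
/-- The graph `Gₙ` on `3n` vertices: a chordless cycle on the vertices `(i, 0)`
(`i ∈ ZMod n`), together with a pendant vertex `(i, 1)` attached to `(i, 0)` and a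
pendant vertex `(i, 2)` attached to `(i, 1)`, for each `i`. -/
def GGraph (n : ℕ) : SimpleGraph (ZMod n × Fin 3) :=
  SimpleGraph.fromRel (fun x y =>
    (x.2 = 0 ∧ y.2 = 0 ∧ y.1 = x.1 + 1) ∨
    (x.2 = 0 ∧ y.2 = 1 ∧ y.1 = x.1) ∨
    (x.2 = 1 ∧ y.2 = 2 ∧ y.1 = x.1))

namespace IPSeg

/-- The signed horizontal offset of `x` from the line through a permutation segment `s`. -/
def offset (s : IPSeg) (x : ℝ × ℝ) : ℝ :=
  ((x.1 - s.p.1) * (s.q.2 - s.p.2) - (x.2 - s.p.2) * (s.q.1 - s.p.1)) * (s.q.2 - s.p.2)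

/-- The segment `t` lies strictly to the right of the permutation segment `s`. -/
def IsRight (s t : IPSeg) : Prop := ∀ x ∈ t.carrier, 0 < s.offset x

theorem p_mem_carrier (s : IPSeg) : s.p ∈ s.carrier := left_mem_segment ℝ _ _

theorem q_mem_carrier (s : IPSeg) : s.q ∈ s.carrier := right_mem_segment ℝ _ _

theorem mem_carrier_iff {s : IPSeg} {x : ℝ × ℝ} :
    x ∈ s.carrier ↔ ∃ θ : ℝ, 0 ≤ θ ∧ θ ≤ 1 ∧
      x.1 = s.p.1 + θ * (s.q.1 - s.p.1) ∧ x.2 = s.p.2 + θ * (s.q.2 - s.p.2) := by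
  rw [carrier, segment_eq_image']
  constructor
  · rintro ⟨θ, ⟨h0, h1⟩, rfl⟩
    exact ⟨θ, h0, h1, by simp, by simp⟩
  · rintro ⟨θ, h0, h1, h2, h3⟩
    exact ⟨θ, ⟨h0, h1⟩, Prod.ext (by simp [h2]) (by simp [h3])⟩

theorem snd_mem_Icc {s : IPSeg} {x : ℝ × ℝ} (hx : x ∈ s.carrier) : x.2 ∈ Set.Icc (1 : ℝ) 2 := by
  obtain ⟨θ, h0, h1, -, h⟩ := mem_carrier_iff.1 hx
  rcases s.hp with hp | hp <;> rcases s.hq with hq | hq <;> rw [hp, hq] at h <;>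
    constructor <;> linarith

theorem IsPermutation.mem_carrier_of_offset_eq_zero {s : IPSeg} (hs : s.IsPermutation)
    {x : ℝ × ℝ} (hx : x.2 ∈ Set.Icc (1 : ℝ) 2) (h : s.offset x = 0) : x ∈ s.carrier := by
  obtain ⟨h1, h2⟩ := hx
  unfold IsPermutation at hs
  unfold offset at h
  rw [mem_carrier_iff]
  rcases s.hp with hp | hp <;> rcases s.hq with hq | hq <;>
    simp only [hp, hq] at h hs ⊢ <;>
    first
    | exact absurd rfl hs
    | exact ⟨x.2 - 1, by linarith, by linarith, by linarith, by linarith⟩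
    | exact ⟨2 - x.2, by linarith, by linarith, by linarith, by linarith⟩

/-- A segment disjoint from a permutation segment `s` lies on one side of it. -/
theorem IsPermutation.isRight_of_pos {s t : IPSeg} (hs : s.IsPermutation)
    (hd : ¬ (s.carrier ∩ t.carrier).Nonempty) {x : ℝ × ℝ} (hx : x ∈ t.carrier)
    (h : 0 < s.offset x) : s.IsRight t := by
  intro y hy
  by_contra! hy0
  have hc : ContinuousOn s.offset t.carrier := by
    unfold offset
    fun_prop
  obtain ⟨z, hz, hz0⟩ := (convex_segment t.p t.q).isPreconnected.intermediate_value hy hx hc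
    ⟨hy0, h.le⟩
  exact hd ⟨z, hs.mem_carrier_of_offset_eq_zero (snd_mem_Icc hz) hz0, hz⟩

theorem IsPermutation.isRight_congr {s t u : IPSeg} (hs : s.IsPermutation)
    (ht : ¬ (s.carrier ∩ t.carrier).Nonempty) (hu : ¬ (s.carrier ∩ u.carrier).Nonempty)
    (htu : (t.carrier ∩ u.carrier).Nonempty) : s.IsRight t ↔ s.IsRight u := by
  obtain ⟨x, hxt, hxu⟩ := htu
  exact ⟨fun h => hs.isRight_of_pos hu hxu (h x hxt), fun h => hs.isRight_of_pos ht hxt (h x hxu)⟩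

/-- Two permutation segments have endpoints at equal height, whose mutual offsets are opposite. -/
theorem IsPermutation.exists_offset_eq_neg {s t : IPSeg} (hs : s.IsPermutation)
    (ht : t.IsPermutation) : ∃ x ∈ t.carrier, ∃ y ∈ s.carrier, t.offset y = - s.offset x := by
  refine ⟨t.p, t.p_mem_carrier, ?_⟩
  unfold IsPermutation at hs ht
  by_cases h : s.p.2 = t.p.2
  · refine ⟨s.p, s.p_mem_carrier, ?_⟩
    unfold offset
    rcases s.hp with hp | hp <;> rcases s.hq with hq | hq <;> rcases t.hp with hp' | hp' <;>
      rcases t.hq with hq' | hq' <;> simp only [hp, hq, hp', hq'] at * <;>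
      first
      | exact absurd rfl hs
      | exact absurd rfl ht
      | linarith
  · refine ⟨s.q, s.q_mem_carrier, ?_⟩
    unfold offset
    rcases s.hp with hp | hp <;> rcases s.hq with hq | hq <;> rcases t.hp with hp' | hp' <;>
      rcases t.hq with hq' | hq' <;> simp only [hp, hq, hp', hq'] at * <;>
      first
      | exact absurd rfl hs
      | exact absurd rfl ht
      | exact absurd trivial h
      | linarith

theorem IsPermutation.isRight_iff_not {s t : IPSeg} (hs : s.IsPermutation)
    (ht : t.IsPermutation) (hd : ¬ (s.carrier ∩ t.carrier).Nonempty) :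
    s.IsRight t ↔ ¬ t.IsRight s := by
  obtain ⟨x, hx, y, hy, hxy⟩ := hs.exists_offset_eq_neg ht
  constructor
  · intro h h'
    have h1 := h x hx
    have h2 := h' y hy
    linarith
  · intro h
    have hd' : ¬ (t.carrier ∩ s.carrier).Nonempty := by rwa [Set.inter_comm]
    have h1 : ¬ 0 < t.offset y := fun h0 => h (ht.isRight_of_pos hd' hy h0)
    have h2 : s.offset x ≠ 0 := fun h0 =>
      hd ⟨x, hs.mem_carrier_of_offset_eq_zero (snd_mem_Icc hx) h0, hx⟩
    exact hs.isRight_of_pos hd hx (lt_of_le_of_ne (by linarith) h2.symm)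

theorem IsInterval.mem_carrier_iff {s : IPSeg} (hs : s.IsInterval) {x : ℝ × ℝ} :
    x ∈ s.carrier ↔ x.1 ∈ Set.uIcc s.p.1 s.q.1 ∧ x.2 = s.p.2 := by
  unfold IsInterval at hs
  rw [carrier, ← segment_eq_uIcc]
  have h : segment ℝ s.p s.q = (fun a : ℝ => (a, s.p.2)) '' segment ℝ s.p.1 s.q.1 := by
    rw [Prod.image_mk_segment_left]
    congr 1
    exact Prod.ext rfl hs.symm
  rw [h]
  constructor
  · rintro ⟨a, ha, rfl⟩
    exact ⟨ha, rfl⟩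
  · rintro ⟨h1, h2⟩
    exact ⟨x.1, h1, Prod.ext rfl h2.symm⟩

/-- An interval segment that meets `s` without being contained in it contains an endpoint of
`s`. -/
theorem IsInterval.endpoint_mem {s t : IPSeg} (hs : s.IsInterval) (ht : t.IsInterval)
    (h : (s.carrier ∩ t.carrier).Nonempty) (hn : ¬ t.carrier ⊆ s.carrier) :
    s.p ∈ t.carrier ∨ s.q ∈ t.carrier := by
  obtain ⟨x, hxs, hxt⟩ := h
  obtain ⟨y, hyt, hys⟩ := Set.not_subset.1 hn
  rw [hs.mem_carrier_iff] at hxs hys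
  rw [ht.mem_carrier_iff] at hxt hyt
  rw [ht.mem_carrier_iff, ht.mem_carrier_iff, ← show s.p.2 = s.q.2 from hs, ← hxs.2]
  simp only [hxt.2, and_true]
  have hy : y.1 ∉ Set.uIcc s.p.1 s.q.1 := fun h => hys ⟨h, by rw [hyt.2, ← hxt.2, hxs.2]⟩
  have h1 := hxs.1
  have h2 := hxt.1
  have h3 := hyt.1
  clear hxs hxt hyt hys hn
  rw [Set.mem_uIcc] at hy h1 h2 h3
  rw [Set.mem_uIcc, Set.mem_uIcc]
  grind

/-- Among interval segments there is no `s` meeting three pairwise disjoint segments none of which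
is contained in `s`. -/
theorem IsInterval.not_three_overlaps {s t u v : IPSeg} (hs : s.IsInterval) (ht : t.IsInterval)
    (hu : u.IsInterval) (hv : v.IsInterval) (hst : (s.carrier ∩ t.carrier).Nonempty)
    (hsu : (s.carrier ∩ u.carrier).Nonempty) (hsv : (s.carrier ∩ v.carrier).Nonempty)
    (ht' : ¬ t.carrier ⊆ s.carrier) (hu' : ¬ u.carrier ⊆ s.carrier)
    (hv' : ¬ v.carrier ⊆ s.carrier) (htu : ¬ (t.carrier ∩ u.carrier).Nonempty)
    (htv : ¬ (t.carrier ∩ v.carrier).Nonempty) (huv : ¬ (u.carrier ∩ v.carrier).Nonempty) :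
    False := by
  rcases hs.endpoint_mem ht hst ht' with h1 | h1 <;>
    rcases hs.endpoint_mem hu hsu hu' with h2 | h2 <;>
    rcases hs.endpoint_mem hv hsv hv' with h3 | h3 <;>
    first
    | exact htu ⟨_, h1, h2⟩
    | exact htv ⟨_, h1, h3⟩
    | exact huv ⟨_, h2, h3⟩

end IPSeg

namespace GGraph

/-- Two indices that are neither equal nor consecutive on the cycle. -/
def Far {n : ℕ} (i j : ZMod n) : Prop := i ≠ j ∧ j ≠ i + 1 ∧ i ≠ j + 1

theorem Far.symm {n : ℕ} {i j : ZMod n} (h : Far i j) : Far j i := ⟨h.1.symm, h.2.2, h.2.1⟩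

theorem Far.not_adj {n : ℕ} {i j : ZMod n} (h : Far i j) (a b : Fin 3) :
    ¬ (GGraph n).Adj (i, a) (j, b) := by
  obtain ⟨h1, h2, h3⟩ := h
  simp only [GGraph, SimpleGraph.fromRel_adj]
  grind

theorem far_of_sub_eq_natCast {n : ℕ} {i j : ZMod n} {t : ℕ} (ht : 2 ≤ t) (htn : t + 2 ≤ n)
    (h : j - i = t) : Far i j := by
  have key : ∀ m : ℕ, 0 < m → m < n → (m : ZMod n) ≠ 0 := fun m h0 h1 h2 =>
    absurd (Nat.le_of_dvd h0 ((ZMod.natCast_eq_zero_iff m n).1 h2)) (by omega)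
  refine ⟨?_, ?_, ?_⟩
  · rintro rfl
    exact key t (by omega) (by omega) (by rw [← h]; ring)
  · rintro rfl
    refine key (t - 1) (by omega) (by omega) ?_
    rw [Nat.cast_sub (by omega), ← h]
    push_cast
    ring
  · rintro rfl
    refine key (t + 1) (by omega) (by omega) ?_
    push_cast
    rw [← h]
    ring

theorem Far.exists_eq {n : ℕ} [NeZero n] {j k : ZMod n} (h : Far j k) :
    ∃ t : ℕ, t + 4 ≤ n ∧ k = j + 2 + t := by
  obtain ⟨h1, h2, h3⟩ := h
  have hk : k = j + 2 + ((k - j - 2).val : ZMod n) := by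
    rw [ZMod.natCast_zmod_val]
    ring
  refine ⟨_, ?_, hk⟩
  have hlt := ZMod.val_lt (k - j - 2)
  generalize (k - j - 2).val = t at hk hlt
  by_contra! hc
  have h0 : t + 1 = n ∨ t + 2 = n ∨ t + 3 = n := by omega
  have hn : ∀ m : ℕ, m = n → (m : ZMod n) = 0 := fun m hm =>
    (ZMod.natCast_eq_zero_iff m n).2 (by rw [hm])
  rcases h0 with h0 | h0 | h0 <;> replace hn := hn _ h0 <;> push_cast at hn
  · exact h2 (by linear_combination hk + hn)
  · exact h1 (by linear_combination -hk - hn)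
  · exact h3 (by linear_combination -hk - hn)

/-- A dominating set of a cycle of length at least nine contains three pairwise far indices. -/
theorem exists_far_triple {n : ℕ} (hn : 9 ≤ n) (K : ZMod n → Prop)
    (hK : ∀ i, K i ∨ K (i - 1) ∨ K (i + 1)) :
    ∃ i j k, K i ∧ K j ∧ K k ∧ Far i j ∧ Far j k ∧ Far i k := by
  obtain ⟨o, ho⟩ : ∃ o, K o := by
    rcases hK 0 with h | h | h <;> exact ⟨_, h⟩
  have hP : ∀ m : ℕ, K (o + m) ∨ K (o + (m + 1 : ℕ)) ∨ K (o + (m + 2 : ℕ)) := by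
    intro m
    have h := hK (o + (m + 1 : ℕ))
    rw [show o + ((m + 1 : ℕ) : ZMod n) - 1 = o + m by push_cast; ring,
      show o + ((m + 1 : ℕ) : ZMod n) + 1 = o + (m + 2 : ℕ) by push_cast; ring] at h
    tauto
  have key : ∀ a b c : ℕ, a + 2 ≤ b → b + 2 ≤ c → c + 2 ≤ n + a → K (o + a) → K (o + b) →
      K (o + c) → ∃ i j k, K i ∧ K j ∧ K k ∧ Far i j ∧ Far j k ∧ Far i k := by
    intro a b c hab hbc hca ha hb hc
    have hfar : ∀ x y : ℕ, x + 2 ≤ y → y + 2 ≤ n + x → Far (o + x : ZMod n) (o + y) := by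
      intro x y h1 h2
      refine far_of_sub_eq_natCast (t := y - x) (by omega) (by omega) ?_
      rw [Nat.cast_sub (by omega)]
      ring
    exact ⟨_, _, _, ha, hb, hc, hfar a b hab (by omega), hfar b c hbc (by omega),
      hfar a c (by omega) hca⟩
  have h0 : K (o + (0 : ℕ)) := by simpa using ho
  by_contra hcon
  have key' : ∀ a b c : ℕ, a + 2 ≤ b → b + 2 ≤ c → c + 2 ≤ n + a → K (o + a) → K (o + b) →
      ¬ K (o + c) := fun a b c h1 h2 h3 ha hb hc => hcon (key a b c h1 h2 h3 ha hb hc)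
  have h1 := hP 1
  have h2 := hP 2
  have h5 := hP 5
  have h6 := hP 6
  norm_num only at h1 h2 h5 h6
  have e1 := key' 0 2 5 (by omega) (by omega) (by omega) h0
  have e2 := key' 0 2 6 (by omega) (by omega) (by omega) h0
  have e3 := key' 0 2 7 (by omega) (by omega) (by omega) h0
  have e4 := key' 0 3 5 (by omega) (by omega) (by omega) h0
  have e5 := key' 0 3 6 (by omega) (by omega) (by omega) h0
  have e6 := key' 0 3 7 (by omega) (by omega) (by omega) h0
  have e7 := key' 0 4 6 (by omega) (by omega) (by omega) h0
  have e8 := key' 0 4 7 (by omega) (by omega) (by omega) h0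
  have e9 := key' 1 4 8 (by omega) (by omega) (by omega)
  clear hP key key' hcon hK
  grind

section Model

variable {n : ℕ} {s : ZMod n × Fin 3 → IPSeg}

theorem meet_of_adj (hs : IsIPSEGModel (GGraph n) s) {u v : ZMod n × Fin 3}
    (h : (GGraph n).Adj u v) : ((s u).carrier ∩ (s v).carrier).Nonempty :=
  (hs u v h.ne).1 h

theorem not_meet_of_far (hs : IsIPSEGModel (GGraph n) s) {i j : ZMod n} (h : Far i j)
    (a b : Fin 3) : ¬ ((s (i, a)).carrier ∩ (s (j, b)).carrier).Nonempty := fun hm =>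
  h.not_adj a b ((hs _ _ fun he => h.1 (congrArg Prod.fst he)).2 hm)

theorem adj_cycle (hn : 2 ≤ n) (i : ZMod n) : (GGraph n).Adj (i, 0) (i + 1, 0) := by
  have : Fact (1 < n) := ⟨hn⟩
  simp [GGraph]

theorem adj_pendant (i : ZMod n) : (GGraph n).Adj (i, 0) (i, 1) := by
  simp [GGraph]

theorem adj_leaf (i : ZMod n) : (GGraph n).Adj (i, 1) (i, 2) := by
  simp [GGraph]

/-- A permutation segment at `j` has all cycle vertices far from `j` on the same side. -/
theorem isRight_cycle (hn : 4 ≤ n) (hs : IsIPSEGModel (GGraph n) s) {j : ZMod n} {a : Fin 3}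
    (hp : (s (j, a)).IsPermutation) {t : ℕ} (ht : t + 4 ≤ n) :
    (s (j, a)).IsRight (s (j + 2 + t, 0)) ↔ (s (j, a)).IsRight (s (j + 2, 0)) := by
  have hfar : ∀ r : ℕ, r + 4 ≤ n → Far j (j + 2 + r) := fun r hr =>
    far_of_sub_eq_natCast (t := r + 2) (by omega) (by omega) (by push_cast; ring)
  induction t with
  | zero => simp
  | succ t ih =>
    refine Iff.trans ?_ (ih (by omega))
    refine hp.isRight_congr (not_meet_of_far hs (hfar _ ht) _ _)
      (not_meet_of_far hs (hfar t (by omega)) _ _) ?_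
    rw [Set.inter_comm]
    have h := meet_of_adj hs (adj_cycle (by omega) (j + 2 + (t : ZMod n)))
    rwa [show j + 2 + (t : ZMod n) + 1 = j + 2 + ((t + 1 : ℕ) : ZMod n) by push_cast; ring] at h

theorem isRight_far (hn : 4 ≤ n) (hs : IsIPSEGModel (GGraph n) s) {j k : ZMod n} {a b : Fin 3}
    (hb : b ≠ 2) (hp : (s (j, a)).IsPermutation) (h : Far j k) :
    (s (j, a)).IsRight (s (k, b)) ↔ (s (j, a)).IsRight (s (j + 2, 0)) := by
  have : NeZero n := ⟨by omega⟩
  have h0 : (s (j, a)).IsRight (s (k, 0)) ↔ (s (j, a)).IsRight (s (j + 2, 0)) := by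
    obtain ⟨t, ht, rfl⟩ := h.exists_eq
    exact isRight_cycle hn hs hp ht
  rw [← h0]
  obtain rfl | rfl : b = 0 ∨ b = 1 := by omega
  · rfl
  · exact hp.isRight_congr (not_meet_of_far hs h _ _) (not_meet_of_far hs h _ _)
      (meet_of_adj hs (adj_pendant k).symm)

/-- Three pairwise far indices cannot all carry a permutation segment. -/
theorem not_three_permutations (hn : 4 ≤ n) (hs : IsIPSEGModel (GGraph n) s) {i j k : ZMod n}
    (hij : Far i j) (hjk : Far j k) (hik : Far i k) {a b c : Fin 3} (ha2 : a ≠ 2) (hb2 : b ≠ 2)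
    (hc2 : c ≠ 2) (ha : (s (i, a)).IsPermutation) (hb : (s (j, b)).IsPermutation)
    (hc : (s (k, c)).IsPermutation) : False := by
  have h1 := isRight_far hn hs hb2 ha hij
  have h2 := isRight_far hn hs hc2 ha hik
  have h3 := isRight_far hn hs ha2 hb hij.symm
  have h4 := isRight_far hn hs hc2 hb hjk
  have h5 := isRight_far hn hs ha2 hc hik.symm
  have h6 := isRight_far hn hs hb2 hc hjk.symm
  have h7 := ha.isRight_iff_not hb (not_meet_of_far hs hij _ _)
  have h8 := hb.isRight_iff_not hc (not_meet_of_far hs hjk _ _)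
  have h9 := ha.isRight_iff_not hc (not_meet_of_far hs hik _ _)
  grind

theorem not_subset_of_meet {s t u : IPSeg} (h : (t.carrier ∩ u.carrier).Nonempty)
    (hd : ¬ (s.carrier ∩ u.carrier).Nonempty) : ¬ t.carrier ⊆ s.carrier := fun hsub =>
  hd (h.mono (Set.inter_subset_inter_left _ hsub))

/-- Every index carries a permutation segment or is next to a cycle vertex that is one. -/
theorem exists_permutation_near (hn : 5 ≤ n) (hs : IsIPSEGModel (GGraph n) s) (i : ZMod n) :
    (s (i, 0)).IsPermutation ∨ (s (i, 1)).IsPermutation ∨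
      (s (i - 1, 0)).IsPermutation ∨ (s (i + 1, 0)).IsPermutation := by
  by_contra! h
  simp only [IPSeg.IsPermutation, ne_eq, not_not] at h
  obtain ⟨h0, h1, h2, h3⟩ := h
  have : Fact (1 < n) := ⟨by omega⟩
  have hprev : ∀ j : ZMod n, ((s (j, 0)).carrier ∩ (s (j - 1, 0)).carrier).Nonempty := by
    intro j
    have h := meet_of_adj hs (adj_cycle (by omega) (j - 1)).symm
    rwa [sub_add_cancel] at h
  have hnext : ∀ j : ZMod n, ((s (j, 0)).carrier ∩ (s (j + 1, 0)).carrier).Nonempty := fun j =>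
    meet_of_adj hs (adj_cycle (by omega) j)
  have hfar : Far (i - 1) (i + 1) :=
    far_of_sub_eq_natCast (t := 2) le_rfl (by omega) (by push_cast; ring)
  have hfar' : Far i (i + 1 + 1) :=
    far_of_sub_eq_natCast (t := 2) le_rfl (by omega) (by push_cast; ring)
  have hfar'' : Far i (i - 1 - 1) :=
    (far_of_sub_eq_natCast (t := 2) le_rfl (by omega) (by push_cast; ring)).symm
  have hleaf : ¬ ((s (i, 0)).carrier ∩ (s (i, 2)).carrier).Nonempty := by
    rw [← hs _ _ (by simp)]
    simp [GGraph]
  have hw : ∀ j : ZMod n, i ≠ j → ¬ ((s (i, 1)).carrier ∩ (s (j, 0)).carrier).Nonempty := by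
    intro j hj
    rw [← hs _ _ (by simp)]
    simp [GGraph, hj]
  exact IPSeg.IsInterval.not_three_overlaps h0 h1 h2 h3 (meet_of_adj hs (adj_pendant i))
    (hprev i) (hnext i) (not_subset_of_meet (meet_of_adj hs (adj_leaf i)) hleaf)
    (not_subset_of_meet (hprev (i - 1)) (not_meet_of_far hs hfar'' _ _))
    (not_subset_of_meet (hnext (i + 1)) (not_meet_of_far hs hfar' _ _))
    (hw _ (by simp [eq_sub_iff_add_eq])) (hw _ (by simp)) (not_meet_of_far hs hfar _ _)

end Model

end GGraph

/-- For every `n ≥ 9`, the graph `Gₙ` is not an IP-SEG graph. -/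
theorem Gn_not_ipseg (n : ℕ) (hn : 9 ≤ n) :
    ¬ ∃ s : ZMod n × Fin 3 → IPSeg, IsIPSEGModel (GGraph n) s := by
  rintro ⟨s, hs⟩
  obtain ⟨i, j, k, ⟨a, ha2, ha⟩, ⟨b, hb2, hb⟩, ⟨c, hc2, hc⟩, hij, hjk, hik⟩ :=
    GGraph.exists_far_triple hn (fun i => ∃ a : Fin 3, a ≠ 2 ∧ (s (i, a)).IsPermutation) (by
      intro i
      rcases GGraph.exists_permutation_near (by omega) hs i with h | h | h | h
      · exact Or.inl ⟨0, by decide, h⟩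
      · exact Or.inl ⟨1, by decide, h⟩
      · exact Or.inr (Or.inl ⟨0, by decide, h⟩)
      · exact Or.inr (Or.inr ⟨0, by decide, h⟩))
  exact GGraph.not_three_permutations (by omega) hs hij hjk hik ha2 hb2 hc2 ha hb hc
end
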